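/- Let l ≥ 1 and let x, y be natural numbers with x < 2^{l−1} and y < 2^{l−1}. Then (2^l + x − y) mod 2^l ≥ 2^{l−1} if and only if x < y. Equivalently, the most significant bit of the l-bit two's-complement representation of x − y equals 1 exactly when x < y. -/

import Mathlib

/-- The hypotheses say that the integer `x - y` lies in the window `[k - n, k)`, whose negative part
is represented modulo `n` by the residues in `[k, n)`; two's complement is `n = 2 * k`. -/
theorem msb_diff_iff_lt_general {n k x y : ℕ} (hlt : x < k + y) (hle : k + y ≤ n + x) :
    k ≤ (n + x - y) % n ↔ x < y := by
  constructor
  · contrapose!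
    intro hyx
    calc (n + x - y) % n = (x - y) % n := by rw [Nat.add_sub_assoc hyx, Nat.add_mod_left]
      _ ≤ x - y := Nat.mod_le _ _
      _ < k := Nat.sub_lt_right_of_lt_add hyx hlt
  · intro hxy
    have no_wrap : n + x - y < n := by omega
    rw [Nat.mod_eq_of_lt no_wrap]
    exact Nat.le_sub_of_add_le hle

/-- The MSB of the `l`-bit two's-complement representation of `x - y`
is 1 exactly when `x < y`, for `x, y < 2^(l-1)`. -/
theorem msb_diff_iff_lt (l : ℕ) (hl : 1 ≤ l) (x y : ℕ)
    (hx : x < 2 ^ (l - 1)) (hy : y < 2 ^ (l - 1)) :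
    2 ^ (l - 1) ≤ (2 ^ l + x - y) % 2 ^ l ↔ x < y := by
  have two_halves : 2 ^ (l - 1) + 2 ^ (l - 1) = 2 ^ l := Nat.two_pow_pred_add_two_pow_pred hl
  exact msb_diff_iff_lt_general (by omega) (by omega)
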